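/- Noncommutative anomaly of the fuzzy sphere: for every fixed natural number L and every real μ ≠ 0, the difference between the nonplanar and planar one-loop two-point sums converges as α → ∞, and lim_{α→∞} (I^NP(L, α, μ) − I^P(α, μ)) = −2·h(L), where h(L) = ∑_{k=1}^{L} 1/k is the harmonic number. -/

import Mathlib

open Filter

/-- The `L`-th harmonic number `h(L) = ∑_{k=1}^L 1/k`, with `h(0) = 0`. -/
noncomputable def harmonicR (L : ℕ) : ℝ := ∑ k ∈ Finset.range L, 1 / ((k : ℝ) + 1)

/-- The Racah 6j-symbol `{α α L; α α J}` via Racah's single-sum formula.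
Here `(−1)^{2α} = 1` since `α` is an integer, and the sum runs over
`n` with `max(0, L−J) ≤ n ≤ min(L, 2α−J)` (truncated ℕ-subtraction realizes
`max(0, L−J)` as `L − J`, and `J + n − L` realizes `J − L + n ≥ 0`). -/
noncomputable def SixJ (α L J : ℕ) : ℝ :=
  (-1 : ℝ) ^ J *
    ∑ n ∈ Finset.Icc (L - J) (min L (2 * α - J)),
      (-1 : ℝ) ^ n * (Nat.choose L n : ℝ) ^ 2 *
        (((Nat.factorial (2 * α - L) : ℝ) * (Nat.factorial (2 * α + J + n + 1) : ℝ) *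
            (Nat.factorial (2 * α - J) : ℝ) * (Nat.factorial J : ℝ) ^ 2) /
          ((Nat.factorial (2 * α + L + 1) : ℝ) * (Nat.factorial (2 * α + J + 1) : ℝ) *
            (Nat.factorial (2 * α - J - n) : ℝ) * (Nat.factorial (J + n - L) : ℝ) ^ 2))

/-- The planar one-loop sum `I^P(α,μ) = ∑_{J=0}^{2α} (2J+1)/(J(J+1)+μ²)`. -/
noncomputable def IP (α : ℕ) (μ : ℝ) : ℝ :=
  ∑ J ∈ Finset.range (2 * α + 1), (2 * (J : ℝ) + 1) / ((J : ℝ) * ((J : ℝ) + 1) + μ ^ 2)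

/-- The nonplanar one-loop sum
`I^NP(L,α,μ) = ∑_{J=0}^{2α} (−1)^{L+J} (2J+1)(2α+1)/(J(J+1)+μ²) · SixJ(α,L,J)`. -/
noncomputable def INP (L α : ℕ) (μ : ℝ) : ℝ :=
  ∑ J ∈ Finset.range (2 * α + 1),
    (-1 : ℝ) ^ (L + J) * ((2 * (J : ℝ) + 1) * (2 * (α : ℝ) + 1)) /
        ((J : ℝ) * ((J : ℝ) + 1) + μ ^ 2) * SixJ α L J


lemma alt_choose_zero (L : ℕ) :
    ∑ m ∈ Finset.range (L + 2), (-1 : ℝ) ^ m * ((L + 1).choose m : ℝ) * ((L + m).choose L : ℝ) = 0 := by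
  have h := fwdDiff_iter_eq_sum_shift (1 : ℕ) (fun x : ℕ => (x.choose L : ℤ)) (L + 1) L
  rw [Function.iterate_succ_apply'] at h
  have h2 := fwdDiff_iter_choose 0 L
  rw [add_zero] at h2
  rw [h2] at h
  simp [fwdDiff] at h
  have h3 : (∑ m ∈ Finset.range (L + 2), (-1 : ℤ) ^ (L + 1 - m) * ((L + 1).choose m : ℤ) * ((L + m).choose L : ℤ)) = 0 := by
    simpa using h.symm
  have h4 : (∑ m ∈ Finset.range (L + 2), (-1 : ℝ) ^ (L + 1 - m) * ((L + 1).choose m : ℝ) * ((L + m).choose L : ℝ)) = 0 := by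
    exact_mod_cast h3
  have : ∑ m ∈ Finset.range (L + 2), (-1 : ℝ) ^ m * ((L + 1).choose m : ℝ) * ((L + m).choose L : ℝ)
     = (-1) ^ (L + 1) * (∑ m ∈ Finset.range (L + 2), (-1 : ℝ) ^ (L + 1 - m) * ((L + 1).choose m : ℝ) * ((L + m).choose L : ℝ)) := by
    rw [Finset.mul_sum]
    refine Finset.sum_congr rfl fun m hm => ?_
    obtain ⟨c, hc⟩ := Nat.exists_eq_add_of_le (Nat.lt_succ_iff.mp (Finset.mem_range.mp hm))
    have e : L + 1 - m = c := by omega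
    rw [e, hc, pow_add]
    have : (-1 : ℝ) ^ c * (-1) ^ c = 1 := by rw [← mul_pow]; simp
    linear_combination (-(-1) ^ m * ((m + c).choose m : ℝ) * ((L + m).choose L : ℝ)) * this
  rw [this, h4, mul_zero]

lemma choose_diff (L m : ℕ) :
    ((L + 1).choose m : ℝ) * ((L + 1 + m).choose (L + 1) : ℝ) * (1 / (m : ℝ))
      - (L.choose m : ℝ) * ((L + m).choose L : ℝ) * (1 / (m : ℝ))
    = if m = 0 then 0 else 2 / ((L : ℝ) + 1) * (((L + 1).choose m : ℝ) * ((L + m).choose L : ℝ)) := by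
  rcases m with _ | k
  · simp
  simp only [Nat.add_eq_zero_iff, one_ne_zero, and_false, if_false]
  have h1 := Nat.add_one_mul_choose_eq (L + (k + 1)) L
  have h2 := Nat.add_one_mul_choose_eq L k
  have h3 := Nat.choose_succ_succ L k
  have h4 : (L + 1 + (k + 1)).choose (L + 1) * (L + 1) = (L + k + 2) * (L + (k + 1)).choose L := by
    rw [show L + 1 + (k + 1) = (L + (k + 1)).succ by omega, show L + 1 = L.succ from rfl, ← h1]
    ring
  simp only [Nat.succ_eq_add_one] at h3
  have h4' : (((L + 1 + (k + 1)).choose (L + 1) : ℕ) : ℝ) * (L + 1) = (L + k + 2) * ((L + (k + 1)).choose L : ℕ) := by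
    exact_mod_cast h4
  have h2' : ((L : ℝ) + 1) * (L.choose k : ℕ) = ((L + 1).choose (k + 1) : ℕ) * (k + 1) := by exact_mod_cast h2
  have h3' : (((L + 1).choose (k + 1) : ℕ) : ℝ) = (L.choose k : ℕ) + (L.choose (k + 1) : ℕ) := by exact_mod_cast h3
  push_cast at *
  generalize (((L + 1 + (k + 1)).choose (L + 1) : ℕ) : ℝ) = A at *
  generalize (((L + (k + 1)).choose L : ℕ) : ℝ) = B at *
  generalize (((L + 1).choose (k + 1) : ℕ) : ℝ) = D at *
  generalize ((L.choose k : ℕ) : ℝ) = E at *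
  generalize ((L.choose (k + 1) : ℕ) : ℝ) = F at *
  have hL : (L : ℝ) + 1 ≠ 0 := by positivity
  have hk : (k : ℝ) + 1 ≠ 0 := by positivity
  obtain rfl : F = D - E := by linarith
  field_simp
  linear_combination D * h4' + B * h2'

lemma harm_ident (L : ℕ) :
    ∑ m ∈ Finset.range (L + 1), (-1 : ℝ) ^ m * ((L.choose m : ℝ) * ((L + m).choose L : ℝ) * (1 / (m : ℝ)))
      = -2 * ∑ k ∈ Finset.range L, 1 / ((k : ℝ) + 1) := by
  induction L with
  | zero => simp
  | succ L ih =>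
    rw [Finset.sum_range_succ _ L, mul_add, ← ih]
    have e : ∑ m ∈ Finset.range (L + 1), (-1 : ℝ) ^ m * ((L.choose m : ℝ) * ((L + m).choose L : ℝ) * (1 / (m : ℝ)))
      = ∑ m ∈ Finset.range (L + 2), (-1 : ℝ) ^ m * ((L.choose m : ℝ) * ((L + m).choose L : ℝ) * (1 / (m : ℝ))) := by
      rw [Finset.sum_range_succ _ (L + 1)]; simp
    rw [e, ← sub_eq_iff_eq_add', ← Finset.sum_sub_distrib]
    have h0 := alt_choose_zero L
    rw [Finset.sum_range_succ'] at h0 ⊢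
    have : ∀ m, (-1 : ℝ) ^ (m + 1) * (((L + 1).choose (m + 1) : ℝ) * ((L + 1 + (m + 1)).choose (L + 1) : ℝ) * (1 / ((m + 1 : ℕ) : ℝ)))
      - (-1 : ℝ) ^ (m + 1) * ((L.choose (m + 1) : ℝ) * ((L + (m + 1)).choose L : ℝ) * (1 / ((m + 1 : ℕ) : ℝ)))
      = 2 / ((L : ℝ) + 1) * ((-1 : ℝ) ^ (m + 1) * ((L + 1).choose (m + 1) : ℝ) * ((L + (m + 1)).choose L : ℝ)) := by
      intro m
      rw [← mul_sub, choose_diff]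
      simp only [Nat.add_eq_zero_iff, one_ne_zero, and_false, if_false]
      ring
    simp only [this]
    rw [← Finset.mul_sum]
    simp at h0 ⊢
    rw [eq_neg_of_add_eq_zero_left h0]; ring

lemma pow_sum_limit (μ : ℝ) (k : ℕ) :
    Tendsto (fun M : ℕ => ∑ J ∈ Finset.range M, (2 * (J : ℝ) + 1) / ((J : ℝ) * ((J : ℝ) + 1) + μ ^ 2) *
      ((M : ℝ)⁻¹ * J) ^ (k + 1)) atTop (nhds (2 / ((k : ℝ) + 1))) := by
  -- ratio
  have hr : Tendsto (fun J : ℕ => (J : ℝ) / ((J : ℝ) + 1)) atTop (nhds 1) := tendsto_natCast_div_add_atTop 1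
  have hi : Tendsto (fun J : ℕ => ((J : ℝ))⁻¹) atTop (nhds 0) := tendsto_inv_atTop_nhds_zero_nat
  let a : ℕ → ℝ := fun J => (2 * (J : ℝ) + 1) / ((J : ℝ) * ((J : ℝ) + 1) + μ ^ 2) * (J : ℝ) ^ (k + 1)
  let g : ℕ → ℝ := fun J => ∑ i ∈ Finset.range (k + 1), ((J : ℝ) / ((J : ℝ) + 1)) ^ (k - i)
  have hg : Tendsto g atTop (nhds ((k : ℝ) + 1)) := by
    have : Tendsto g atTop (nhds (∑ i ∈ Finset.range (k + 1), (1 : ℝ) ^ (k - i))) :=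
      tendsto_finsetSum _ fun i _ => hr.pow _
    simpa using this
  have hg2 : ∀ J : ℕ, ((J : ℝ) + 1) ^ k * g J = ((J : ℝ) + 1) ^ (k + 1) - (J : ℝ) ^ (k + 1) := by
    intro J
    have := (Commute.all ((J : ℝ) + 1) (J : ℝ)).geom_sum₂_mul (k + 1)
    rw [← this, add_sub_cancel_left, mul_one, Finset.mul_sum]
    refine Finset.sum_congr rfl fun i hi => ?_
    obtain ⟨c, hc⟩ := Nat.exists_eq_add_of_le (Nat.lt_succ_iff.mp (Finset.mem_range.mp hi))
    have e1 : k - i = c := by omega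
    have e2 : k + 1 - 1 - i = c := by omega
    have : (J : ℝ) + 1 ≠ 0 := by positivity
    rw [e1, e2, hc, pow_add, div_pow]
    field_simp
  let b : ℕ → ℝ := fun J => (2 + (J : ℝ)⁻¹) / (1 + (J : ℝ)⁻¹ + μ ^ 2 * ((J : ℝ)⁻¹) ^ 2)
  have hb : Tendsto b atTop (nhds 2) := by
    have h1 : Tendsto (fun J : ℕ => 2 + (J : ℝ)⁻¹) atTop (nhds (2 + 0)) := hi.const_add 2
    have h2 : Tendsto (fun J : ℕ => 1 + (J : ℝ)⁻¹ + μ ^ 2 * ((J : ℝ)⁻¹) ^ 2) atTop (nhds (1 + 0 + μ ^ 2 * 0 ^ 2)) :=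
      (hi.const_add 1).add ((hi.pow 2).const_mul _)
    have h3 := h1.div h2 (by norm_num)
    have z : ((2 : ℝ) + 0) / (1 + 0 + μ ^ 2 * 0 ^ 2) = 2 := by norm_num
    rw [z] at h3
    exact h3
  let e : ℕ → ℝ := fun J => a J / ((J : ℝ) + 1) ^ k - 2 / ((k : ℝ) + 1) * g J
  have he : Tendsto e atTop (nhds 0) := by
    have h1 : Tendsto (fun J : ℕ => a J / ((J : ℝ) + 1) ^ k) atTop (nhds (2 * 1 ^ k)) := by
      refine (hb.mul (hr.pow k)).congr' ?_
      filter_upwards [eventually_gt_atTop 0] with J hJ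
      have hJ' : (0 : ℝ) < J := by exact_mod_cast hJ
      have h1 : (J : ℝ) * (J + 1) + μ ^ 2 ≠ 0 := by positivity
      have h2 : 1 + (J : ℝ)⁻¹ + μ ^ 2 * ((J : ℝ)⁻¹) ^ 2 ≠ 0 := by positivity
      simp only [a, b]
      have : (2 + (J : ℝ)⁻¹) / (1 + (J : ℝ)⁻¹ + μ ^ 2 * ((J : ℝ)⁻¹) ^ 2) = (2 * (J : ℝ) + 1) * J / ((J : ℝ) * ((J : ℝ) + 1) + μ ^ 2) := by
        rw [div_eq_div_iff h2 h1]
        field_simp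
      rw [this, div_pow, pow_succ]
      field_simp
      ring
    have := h1.sub (hg.const_mul (2 / ((k : ℝ) + 1)))
    have z : (2 * 1 ^ k - 2 / ((k : ℝ) + 1) * ((k : ℝ) + 1)) = 0 := by
      have : (k : ℝ) + 1 ≠ 0 := by positivity
      field_simp; simp
    rwa [z] at this
  have hc := (he.abs).cesaro
  rw [abs_zero] at hc
  have key : ∀ M : ℕ, 0 < M → |∑ J ∈ Finset.range M, (2 * (J : ℝ) + 1) / ((J : ℝ) * ((J : ℝ) + 1) + μ ^ 2) *
      ((M : ℝ)⁻¹ * J) ^ (k + 1) - 2 / ((k : ℝ) + 1)| ≤ (M : ℝ)⁻¹ * ∑ J ∈ Finset.range M, |e J| := by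
    intro M hM
    have hM' : (0 : ℝ) < M := by exact_mod_cast hM
    have tel : ∑ J ∈ Finset.range M, ((J : ℝ) + 1) ^ k * g J = (M : ℝ) ^ (k + 1) := by
      simp only [hg2]
      have := Finset.sum_range_sub (fun J : ℕ => (J : ℝ) ^ (k + 1)) M
      simpa using this
    have ea : ∀ J : ℕ, a J = ((J : ℝ) + 1) ^ k * e J + 2 / ((k : ℝ) + 1) * (((J : ℝ) + 1) ^ k * g J) := by
      intro J
      have : (J : ℝ) + 1 ≠ 0 := by positivity
      simp only [e]
      field_simp
      ring
    have s1 : ∑ J ∈ Finset.range M, (2 * (J : ℝ) + 1) / ((J : ℝ) * ((J : ℝ) + 1) + μ ^ 2) *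
      ((M : ℝ)⁻¹ * J) ^ (k + 1) = ((M : ℝ)⁻¹) ^ (k + 1) * ∑ J ∈ Finset.range M, a J := by
      rw [Finset.mul_sum]
      refine Finset.sum_congr rfl fun J _ => ?_
      simp only [a, mul_pow]; ring
    rw [s1]
    simp only [ea]
    rw [Finset.sum_add_distrib, ← Finset.mul_sum, tel]
    have : ((M : ℝ)⁻¹) ^ (k + 1) * (∑ J ∈ Finset.range M, ((J : ℝ) + 1) ^ k * e J + 2 / ((k : ℝ) + 1) * (M : ℝ) ^ (k + 1)) - 2 / ((k : ℝ) + 1)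
      = ((M : ℝ)⁻¹) ^ (k + 1) * ∑ J ∈ Finset.range M, ((J : ℝ) + 1) ^ k * e J := by
      have h : ((M : ℝ)⁻¹) ^ (k + 1) * (M : ℝ) ^ (k + 1) = 1 := by
        rw [← mul_pow, inv_mul_cancel₀ hM'.ne', one_pow]
      linear_combination (2 / ((k : ℝ) + 1)) * h
    rw [this, abs_mul, abs_of_pos (by positivity : (0 : ℝ) < (M : ℝ)⁻¹ ^ (k + 1)), pow_succ', mul_assoc]
    refine mul_le_mul_of_nonneg_left ?_ (by positivity)
    rw [inv_pow, inv_mul_le_iff₀ (by positivity), Finset.mul_sum]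
    refine (Finset.abs_sum_le_sum_abs _ _).trans (Finset.sum_le_sum fun J hJ => ?_)
    rw [abs_mul, abs_of_pos (by positivity)]
    refine mul_le_mul_of_nonneg_right ?_ (abs_nonneg _)
    have : (J : ℝ) + 1 ≤ M := by exact_mod_cast Finset.mem_range.mp hJ
    gcongr
  rw [tendsto_iff_norm_sub_tendsto_zero]
  refine squeeze_zero' (Eventually.of_forall fun _ => norm_nonneg _) ?_ hc
  filter_upwards [eventually_gt_atTop 0] with M hM
  exact key M hM
open Polynomial in
lemma legendre_int (L : ℕ) :
    ∑ n ∈ Finset.range (L + 1), C ((-1 : ℤ) ^ (L + n) * (L.choose n : ℤ) ^ 2) * ((1 - X) ^ n * X ^ (L - n))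
      = shiftedLegendre L := by
  have hf : ((L.factorial : ℕ) : ℤ[X]) ≠ 0 := by exact_mod_cast L.factorial_ne_zero
  apply mul_left_cancel₀ hf
  rw [factorial_mul_shiftedLegendre_eq, iterate_derivative_mul, Finset.mul_sum, ← Finset.sum_range_reflect]
  refine Finset.sum_congr rfl fun n hn => ?_
  obtain ⟨c, rfl⟩ := Nat.exists_eq_add_of_le (Nat.lt_succ_iff.mp (Finset.mem_range.mp hn))
  have e1 : n + c + 1 - 1 - n = c := by omega
  have e2 : n + c - c = n := by omega
  have e3 : n + c - n = c := by omega
  have hd : derivative^[n] ((1 - X : ℤ[X]) ^ (n + c)) = (-1) ^ n * ((n + c).descFactorial n • (1 - X) ^ c) := by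
    have := iterate_derivative_comp_one_sub_X ((X : ℤ[X]) ^ (n + c)) n
    rw [iterate_derivative_X_pow_eq_smul, e3] at this
    simpa using this
  have hx : derivative^[c] ((X : ℤ[X]) ^ (n + c)) = ((n + c).descFactorial c • X ^ n) := by
    rw [iterate_derivative_X_pow_eq_smul, e2]
    simp
  rw [e1, e2, e3, hd, hx]
  have h1 : (n + c).choose c = (n + c).choose n := by
    rw [Nat.choose_symm_add]
  have hcomb : (n + c).descFactorial n * (n + c).descFactorial c = (n + c).factorial * (n + c).choose n := by
    have p : 0 < n.factorial * c.factorial := by positivity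
    have q1 := Nat.factorial_mul_descFactorial (Nat.le_add_right n c)
    have q2 := Nat.factorial_mul_descFactorial (Nat.le_add_left c n)
    have q3 := Nat.add_choose_mul_factorial_mul_factorial n c
    rw [h1] at q3
    rw [e3] at q1
    rw [e2] at q2
    apply Nat.eq_of_mul_eq_mul_left p
    calc _ = (c.factorial * (n + c).descFactorial n) * (n.factorial * (n + c).descFactorial c) := by ring
      _ = (n + c).factorial * (n + c).factorial := by rw [q1, q2]
      _ = ((n + c).choose n * n.factorial * c.factorial) * (n + c).factorial := by rw [q3]
      _ = _ := by ring
  have hcomb' : (((n + c).descFactorial n : ℕ) : ℤ[X]) * ((n + c).descFactorial c : ℕ) = ((n + c).factorial : ℕ) * ((n + c).choose n : ℕ) := by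
    exact_mod_cast hcomb
  have s : (-1 : ℤ[X]) ^ (c + c) = 1 := by rw [← two_mul]; simp
  simp only [h1, nsmul_eq_mul, map_mul, map_pow, map_neg, map_one, map_natCast]
  have : (-1 : ℤ[X]) ^ (n + c + c) = (-1) ^ n := by rw [add_assoc, pow_add, s, mul_one]
  rw [this]
  linear_combination (-(-1) ^ n * ((n + c).choose n : ℕ) * (1 - X) ^ c * X ^ n) * hcomb'

/-- The bivariate polynomial (inner variable `ε`, outer variable `X`). -/
noncomputable def rPoly (L : ℕ) : Polynomial (Polynomial ℝ) :=
  ∑ n ∈ Finset.range (L + 1), Polynomial.C (Polynomial.C ((-1 : ℝ) ^ (L + n) * (L.choose n : ℝ) ^ 2)) *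
    ((∏ i ∈ Finset.range n, (1 - (Polynomial.X + Polynomial.C (Polynomial.C ((i : ℝ) + 1) * Polynomial.X)) ^ 2)) *
      (∏ i ∈ Finset.range (L - n), (Polynomial.X - Polynomial.C (Polynomial.C (i : ℝ) * Polynomial.X))) ^ 2)

lemma rPoly_eval (L : ℕ) (ε x : ℝ) : (rPoly L).eval₂ (Polynomial.evalRingHom ε) x =
    ∑ n ∈ Finset.range (L + 1), ((-1 : ℝ) ^ (L + n) * (L.choose n : ℝ) ^ 2) *
      ((∏ i ∈ Finset.range n, (1 - (x + ((i : ℝ) + 1) * ε) ^ 2)) *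
        (∏ i ∈ Finset.range (L - n), (x - (i : ℝ) * ε)) ^ 2) := by
  rw [rPoly, ← Polynomial.coe_eval₂RingHom]
  simp only [map_sum, map_mul, map_prod, map_pow, map_sub, map_add, map_one, Polynomial.coe_eval₂RingHom,
    Polynomial.eval₂_C, Polynomial.eval₂_X, Polynomial.coe_evalRingHom, Polynomial.eval_X, Polynomial.eval_C,
    map_neg, map_natCast, Polynomial.eval₂_natCast, Polynomial.eval_natCast]

open Polynomial in
lemma rPoly_map_zero (L : ℕ) : (rPoly L).map (evalRingHom 0) =
    ∑ m ∈ Finset.range (L + 1), monomial (2 * m) ((-1 : ℝ) ^ m * (L.choose m : ℝ) * ((L + m).choose L : ℝ)) := by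
  have h := congrArg (fun p => (p.map (Int.castRingHom ℝ)).comp (X ^ 2)) (legendre_int L)
  simp only [shiftedLegendre, Polynomial.map_sum, ← coe_compRingHom_apply, map_sum] at h
  simp only [coe_compRingHom_apply] at h
  have h2 : (rPoly L).map (evalRingHom 0) = ∑ n ∈ Finset.range (L + 1),
      (C ((-1 : ℝ) ^ (L + n) * (L.choose n : ℝ) ^ 2)) * ((1 - X ^ 2) ^ n * (X ^ 2) ^ (L - n)) := by
    rw [rPoly, Polynomial.map_sum]
    refine Finset.sum_congr rfl fun n _ => ?_
    simp [Polynomial.map_prod, ← pow_mul, mul_comm]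
  rw [h2]
  convert h using 2 with n hn n hn
  · simp
  · rw [← C_mul_X_pow_eq_monomial]
    simp [← pow_mul]

open Polynomial in
lemma rPoly_limit_sum (L : ℕ) :
    ∑ k ∈ Finset.range (rPoly L).natDegree, ((rPoly L).coeff (k + 1)).eval 0 * (2 / ((k : ℝ) + 1))
      = -2 * ∑ k ∈ Finset.range L, 1 / ((k : ℝ) + 1) := by
  rw [← harm_ident]
  let lam : ℝ[X] →ₗ[ℝ] ℝ := lsum fun k => (2 / (k : ℝ)) • LinearMap.id
  have h1 : lam ((rPoly L).map (evalRingHom 0)) = ∑ k ∈ Finset.range (rPoly L).natDegree, ((rPoly L).coeff (k + 1)).eval 0 * (2 / ((k : ℝ) + 1)) := by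
    simp only [lam, lsum_apply]
    rw [sum_over_range' _ _ ((rPoly L).natDegree + 1) (Nat.lt_succ_of_le natDegree_map_le), Finset.sum_range_succ']
    · simp [mul_comm]
    · simp
  rw [← h1, rPoly_map_zero, map_sum]
  refine Finset.sum_congr rfl fun m _ => ?_
  simp only [lam, lsum_apply]
  rw [sum_monomial_index]
  · rcases Nat.eq_zero_or_pos m with rfl | hm
    · simp
    · have : (m : ℝ) ≠ 0 := by positivity
      simp
      field_simp
  · simp

lemma fact_add (a n : ℕ) : ((a + n).factorial : ℝ) = a.factorial * ∏ i ∈ Finset.range n, ((a : ℝ) + i + 1) := by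
  induction n with
  | zero => simp
  | succ n ih =>
    rw [← add_assoc, Nat.factorial_succ, Finset.prod_range_succ, ← mul_assoc, ← ih]
    push_cast; ring

lemma fact_sub (b n : ℕ) (h : n ≤ b) :
    (b.factorial : ℝ) = (b - n).factorial * ∏ i ∈ Finset.range n, ((b : ℝ) - i) := by
  induction n with
  | zero => simp
  | succ n ih =>
    rw [ih (by omega), Finset.prod_range_succ, show b - n = (b - (n + 1)) + 1 by omega, Nat.factorial_succ]
    have : ((b - (n + 1) : ℕ) : ℝ) = b - (n + 1) := by rw [Nat.cast_sub h]; push_cast; ring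
    push_cast
    rw [this]; ring

lemma prod_sub_zero (b n : ℕ) (h : b < n) : ∏ i ∈ Finset.range n, ((b : ℝ) - i) = 0 :=
  Finset.prod_eq_zero (Finset.mem_range.mpr h) (sub_self _)

lemma sixJ_unscaled (α L J : ℕ) (hL : L ≤ 2 * α) (hJ : J ≤ 2 * α) :
    (-1 : ℝ) ^ (L + J) * (2 * (α : ℝ) + 1) * SixJ α L J *
      ∏ i ∈ Finset.range L, ((2 * (α : ℝ) + 1) ^ 2 - ((i : ℝ) + 1) ^ 2) =
    ∑ n ∈ Finset.range (L + 1), ((-1 : ℝ) ^ (L + n) * (L.choose n : ℝ) ^ 2) *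
      ((∏ i ∈ Finset.range n, ((2 * (α : ℝ) + 1) ^ 2 - ((J : ℝ) + ((i : ℝ) + 1)) ^ 2)) *
        (∏ i ∈ Finset.range (L - n), ((J : ℝ) - i)) ^ 2) := by
  have hsub : Finset.Icc (L - J) (min L (2 * α - J)) ⊆ Finset.range (L + 1) := by
    intro n hn
    simp only [Finset.mem_Icc, Finset.mem_range] at *
    omega
  have hsplit : ∀ n, ∏ i ∈ Finset.range n, ((2 * (α : ℝ) + 1) ^ 2 - ((J : ℝ) + ((i : ℝ) + 1)) ^ 2)
      = (∏ i ∈ Finset.range n, (((2 * α + J + 1 : ℕ) : ℝ) + i + 1)) * ∏ i ∈ Finset.range n, (((2 * α - J : ℕ) : ℝ) - i) := by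
    intro n
    rw [← Finset.prod_mul_distrib]
    refine Finset.prod_congr rfl fun i _ => ?_
    rw [Nat.cast_sub hJ]; push_cast; ring
  rw [← Finset.sum_subset hsub]
  · rw [SixJ, ← mul_assoc, Finset.mul_sum, Finset.sum_mul]
    refine Finset.sum_congr rfl fun n hn => ?_
    simp only [Finset.mem_Icc] at hn
    have hD : ((2 * α + L + 1).factorial : ℝ) = (2 * α - L).factorial * ((2 * (α : ℝ) + 1) *
        ∏ i ∈ Finset.range L, ((2 * (α : ℝ) + 1) ^ 2 - ((i : ℝ) + 1) ^ 2)) := by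
      rw [show 2 * α + L + 1 = (2 * α + 1) + L by omega, fact_add, Nat.factorial_succ]
      push_cast
      rw [fact_sub (2 * α) L hL]
      have : ∏ i ∈ Finset.range L, ((2 * (α : ℝ) + 1) ^ 2 - ((i : ℝ) + 1) ^ 2) =
        (∏ i ∈ Finset.range L, (((2 * α : ℕ) : ℝ) - i)) * ∏ i ∈ Finset.range L, (2 * (α : ℝ) + 1 + i + 1) := by
        rw [← Finset.prod_mul_distrib]
        refine Finset.prod_congr rfl fun i _ => ?_
        push_cast; ring
      rw [this]; ring
    have h1 := fact_add (2 * α + J + 1) n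
    rw [show 2 * α + J + 1 + n = 2 * α + J + n + 1 by omega] at h1
    have h2 := fact_sub (2 * α - J) n (by omega)
    have h3 := fact_sub J (L - n) (by omega)
    rw [show J - (L - n) = J + n - L by omega] at h3
    have hDne : (2 * (α : ℝ) + 1) * ∏ i ∈ Finset.range L, ((2 * (α : ℝ) + 1) ^ 2 - ((i : ℝ) + 1) ^ 2) ≠ 0 := by
      intro h0
      rw [h0, mul_zero] at hD
      exact (Nat.cast_ne_zero.mpr (Nat.factorial_ne_zero _)) hD
    have f1 : ((2 * α - L).factorial : ℝ) ≠ 0 := Nat.cast_ne_zero.mpr (Nat.factorial_ne_zero _)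
    have f2 : ((2 * α + J + 1).factorial : ℝ) ≠ 0 := Nat.cast_ne_zero.mpr (Nat.factorial_ne_zero _)
    have f3 : ((2 * α - J - n).factorial : ℝ) ≠ 0 := Nat.cast_ne_zero.mpr (Nat.factorial_ne_zero _)
    have f4 : ((J + n - L).factorial : ℝ) ≠ 0 := Nat.cast_ne_zero.mpr (Nat.factorial_ne_zero _)
    rw [hsplit, hD, h1, h2, h3]
    have sJ : (-1 : ℝ) ^ (L + J) * (-1) ^ J * (-1) ^ n = (-1) ^ (L + n) := by
      rw [pow_add, pow_add, mul_assoc ((-1 : ℝ) ^ L), ← pow_add, ← two_mul]; simp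
    rw [← sJ]
    generalize ((2 * α - L).factorial : ℝ) = F1 at *
    generalize ((2 * α + J + 1).factorial : ℝ) = F2 at *
    generalize ((2 * α - J - n).factorial : ℝ) = F3 at *
    generalize ((J + n - L).factorial : ℝ) = F4 at *
    have hM := left_ne_zero_of_mul hDne
    have hP := right_ne_zero_of_mul hDne
    generalize ∏ i ∈ Finset.range L, ((2 * (α : ℝ) + 1) ^ 2 - ((i : ℝ) + 1) ^ 2) = P at *
    generalize ∏ i ∈ Finset.range n, (((2 * α + J + 1 : ℕ) : ℝ) + i + 1) = Q1 at *
    generalize ∏ i ∈ Finset.range n, (((2 * α - J : ℕ) : ℝ) - i) = Q2 at *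
    generalize ∏ i ∈ Finset.range (L - n), ((J : ℝ) - i) = Q3 at *
    generalize (2 * (α : ℝ) + 1) = M at *
    field_simp
  · intro n hn hn'
    simp only [Finset.mem_Icc, Finset.mem_range] at hn hn'
    rw [hsplit]
    by_cases h : n < L - J
    · rw [prod_sub_zero J (L - n) (by omega)]; simp
    · rw [prod_sub_zero (2 * α - J) n (by omega)]; simp

lemma rPoly_zero (L : ℕ) (ε : ℝ) : (rPoly L).eval₂ (Polynomial.evalRingHom ε) 0 =
    ∏ i ∈ Finset.range L, (1 - (((i : ℝ) + 1) * ε) ^ 2) := by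
  rw [rPoly_eval, Finset.sum_eq_single L]
  · rw [← two_mul]; simp
  · intro n hn hn'
    simp only [Finset.mem_range] at hn
    have : ∏ i ∈ Finset.range (L - n), ((0 : ℝ) - (i : ℝ) * ε) = 0 :=
      Finset.prod_eq_zero (i := 0) (Finset.mem_range.mpr (by omega)) (by simp)
    rw [this]; simp
  · simp

lemma rPoly_zero' (L : ℕ) (ε : ℝ) : ((rPoly L).coeff 0).eval ε =
    ∏ i ∈ Finset.range L, (1 - (((i : ℝ) + 1) * ε) ^ 2) := by
  rw [← rPoly_zero, Polynomial.eval₂_at_zero]; rfl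

lemma sixJ_scaled (α L J : ℕ) (hL : L ≤ 2 * α) (hJ : J ≤ 2 * α) :
    (-1 : ℝ) ^ (L + J) * (2 * (α : ℝ) + 1) * SixJ α L J * ((rPoly L).coeff 0).eval (2 * (α : ℝ) + 1)⁻¹ =
    (rPoly L).eval₂ (Polynomial.evalRingHom (2 * (α : ℝ) + 1)⁻¹) ((2 * (α : ℝ) + 1)⁻¹ * J) := by
  have h := sixJ_unscaled α L J hL hJ
  have hM : (2 * (α : ℝ) + 1) ≠ 0 := by positivity
  rw [rPoly_zero', rPoly_eval]
  generalize (2 * (α : ℝ) + 1) = M at *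
  have e1 : ∏ i ∈ Finset.range L, (1 - (((i : ℝ) + 1) * M⁻¹) ^ 2) =
      (M⁻¹ ^ 2) ^ L * ∏ i ∈ Finset.range L, (M ^ 2 - ((i : ℝ) + 1) ^ 2) := by
    rw [← Finset.card_range L, ← Finset.prod_const, Finset.card_range, ← Finset.prod_mul_distrib]
    refine Finset.prod_congr rfl fun i _ => ?_
    field_simp
  rw [e1]
  rw [show ∀ a b c d : ℝ, a * b * c * ((M⁻¹ ^ 2) ^ L * d) = (M⁻¹ ^ 2) ^ L * (a * b * c * d) by intros; ring, h, Finset.mul_sum]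
  refine Finset.sum_congr rfl fun n hn => ?_
  have e2 : ∏ i ∈ Finset.range n, (1 - (M⁻¹ * J + ((i : ℝ) + 1) * M⁻¹) ^ 2) =
      (M⁻¹ ^ 2) ^ n * ∏ i ∈ Finset.range n, (M ^ 2 - ((J : ℝ) + ((i : ℝ) + 1)) ^ 2) := by
    rw [← Finset.card_range n, ← Finset.prod_const, Finset.card_range, ← Finset.prod_mul_distrib]
    refine Finset.prod_congr rfl fun i _ => ?_
    field_simp
  have e3 : ∏ i ∈ Finset.range (L - n), (M⁻¹ * J - (i : ℝ) * M⁻¹) =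
      M⁻¹ ^ (L - n) * ∏ i ∈ Finset.range (L - n), ((J : ℝ) - i) := by
    rw [← Finset.card_range (L - n), ← Finset.prod_const, Finset.card_range, ← Finset.prod_mul_distrib]
    refine Finset.prod_congr rfl fun i _ => ?_
    ring
  rw [e2, e3]
  have e4 : (M⁻¹ ^ 2) ^ L = (M⁻¹ ^ 2) ^ n * (M⁻¹ ^ (L - n)) ^ 2 := by
    rw [← pow_mul, ← pow_mul, ← pow_mul, ← pow_add]
    congr 1
    have := Finset.mem_range.mp hn
    omega
  rw [e4]; ring

lemma diff_eq (α L : ℕ) (μ : ℝ) (hL : L ≤ 2 * α) :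
    INP L α μ - IP α μ = (((rPoly L).coeff 0).eval (2 * (α : ℝ) + 1)⁻¹)⁻¹ *
      ∑ k ∈ Finset.range (rPoly L).natDegree, ((rPoly L).coeff (k + 1)).eval (2 * (α : ℝ) + 1)⁻¹ *
        ∑ J ∈ Finset.range (2 * α + 1), (2 * (J : ℝ) + 1) / ((J : ℝ) * ((J : ℝ) + 1) + μ ^ 2) *
      (((2 * α + 1 : ℕ) : ℝ)⁻¹ * J) ^ (k + 1) := by
  have hr : ((rPoly L).coeff 0).eval (2 * (α : ℝ) + 1)⁻¹ ≠ 0 := by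
    rw [rPoly_zero', Finset.prod_ne_zero_iff]
    intro i hi
    have h1 : (i : ℝ) + 1 < 2 * (α : ℝ) + 1 := by
      have : i + 1 < 2 * α + 1 := by have := Finset.mem_range.mp hi; omega
      exact_mod_cast this
    have h2 : ((i : ℝ) + 1) * (2 * (α : ℝ) + 1)⁻¹ < 1 := by
      rw [← div_eq_mul_inv, div_lt_one (by positivity)]; exact h1
    have h3 : 0 ≤ ((i : ℝ) + 1) * (2 * (α : ℝ) + 1)⁻¹ := by positivity
    nlinarith
  simp only [Finset.mul_sum]
  rw [Finset.sum_comm, INP, IP, ← Finset.sum_sub_distrib]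
  refine Finset.sum_congr rfl fun J hJ => ?_
  have h := sixJ_scaled α L J hL (by have := Finset.mem_range.mp hJ; omega)
  rw [Polynomial.eval₂_eq_sum_range, Finset.sum_range_succ'] at h
  simp only [Polynomial.coe_evalRingHom, pow_zero, mul_one] at h
  have h' := eq_div_of_mul_eq hr h
  rw [add_div, div_self hr, div_eq_inv_mul, Finset.mul_sum] at h'
  push_cast
  calc _ = (2 * (J : ℝ) + 1) / ((J : ℝ) * ((J : ℝ) + 1) + μ ^ 2) * ((-1 : ℝ) ^ (L + J) * (2 * (α : ℝ) + 1) * SixJ α L J - 1) := by ring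
    _ = _ := by
      rw [h', add_sub_cancel_right, Finset.mul_sum]
      refine Finset.sum_congr rfl fun k _ => ?_
      ring

/-- Noncommutative anomaly of the fuzzy sphere: for every fixed `L ∈ ℕ` and every
`μ ≠ 0`, the difference between the nonplanar and planar one-loop two-point sums
converges as `α → ∞`, with limit `−2·h(L)`. -/
theorem noncommutative_anomaly (L : ℕ) (μ : ℝ) (hμ : μ ≠ 0) :
    Tendsto (fun α : ℕ => INP L α μ - IP α μ) atTop (nhds (-2 * harmonicR L)) := by
  have hM : Tendsto (fun α : ℕ => 2 * α + 1) atTop atTop :=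
    tendsto_atTop_mono (fun n => by simp only [id]; omega) tendsto_id
  have hε : Tendsto (fun α : ℕ => (2 * (α : ℝ) + 1)⁻¹) atTop (nhds 0) := by
    have := (tendsto_inv_atTop_nhds_zero_nat (𝕜 := ℝ)).comp hM
    refine this.congr fun α => ?_
    simp
  have hc : ∀ k, Tendsto (fun α : ℕ => ((rPoly L).coeff k).eval (2 * (α : ℝ) + 1)⁻¹) atTop
      (nhds (((rPoly L).coeff k).eval 0)) := fun k =>
    (((rPoly L).coeff k).continuous.tendsto 0).comp hε
  have h0 : ((rPoly L).coeff 0).eval (0 : ℝ) = 1 := by rw [rPoly_zero']; simp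
  have hlim := ((hc 0).inv₀ (by rw [h0]; exact one_ne_zero)).mul
    (tendsto_finsetSum (Finset.range (rPoly L).natDegree) fun k _ =>
      (hc (k + 1)).mul ((pow_sum_limit μ k).comp hM))
  rw [h0, inv_one, one_mul, rPoly_limit_sum] at hlim
  refine hlim.congr' ?_
  filter_upwards [eventually_ge_atTop L] with α hα
  rw [diff_eq α L μ (by omega)]
  rfl
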